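/- Let M be a minimal weighted n-fold blocking set of Rédei type in PG(2,q), q = p^h with p prime, with n < q, and let ℓ be a Rédei line of M. If the number of distinct points of ℓ lying in the support of M is at most p^{h−1} + 1 (that is, q/p + 1), then every line of PG(2,q) meets M in a number of points congruent to n modulo p. -/

import Mathlib

/-!
Take the Rédei line `l` as the line at infinity, and let `U` be the affine part of `M`, of size
`nq`. The affine lines through a point `E` of `l` are the level sets of the affine function
`affForm l w`, where `w` is any linear form vanishing at `E` and independent of `l`.

* If `E ∉ M`, each of the `q` affine lines through `E` has at least `n` points of `U`, hence exactly
  `n` (`count_eq_of_not_mem`); so the power sums of `affForm l w` over `U` vanish for exponents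
  `j < q - 1`.
* If `E ∈ M`, let `v₀` vanish at `E` and `v` not. The power sum `∑ (v + y v₀) ^ j` over `U` is a
  polynomial in `y` of degree at most `j`. The forms `v + y v₀` represent all directions other than
  `E`, at most `q / p` of which lie in `M`, so there are at least `q - q / p` zeros. For
  `j < q - q / p` the leading coefficient `∑ v₀ ^ j` is therefore zero
  (`sum_pow_eq_zero_of_many`).
* A multiset of field elements whose power sums of exponent `j < q - q / p` all vanish has constant
  multiplicities modulo `p` (`count_const`): the polynomial interpolating the multiplicities has
  degree less than `q / p` and equals its own `p`-th power. Hence the affine lines through `E` all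
  meet `M` in the same number of points modulo `p` (`count_const_of_few`), and this number is `n`
  as soon as one of them meets `M` in exactly `n` points.

Since `n < q`, some affine point `Q` is not in `M`. Counting `M` along the lines through `Q` shows
that the essential line through `E` may be taken different from `l`, and then gives the congruence
for `l` itself.
-/

attribute [local instance] Classical.propDecidable

noncomputable section

/-- Points of `PG(2,q)`: 1-dimensional subspaces of `F³`. -/
abbrev PGPoint (F : Type) [Field F] := Projectivization F (Fin 3 → F)

instance (F : Type) [Field F] [Fintype F] : Finite (PGPoint F) := Quotient.finite _

variable {F : Type} [Field F]

/-- Incidence between a line with dual coordinates `l` and a point `P` of `PG(2,q)`. -/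
def PGIncident (l P : PGPoint F) : Prop := ∑ i, l.rep i * P.rep i = 0

/-- The number of points of the multiset `M`, counted with multiplicity, on the line `l`. -/
def lineMeets (M : Multiset (PGPoint F)) (l : PGPoint F) : ℕ :=
  Multiset.countP (PGIncident l) M

/-- The multiset of all points of the line `l`, each with multiplicity one. -/
def pgLinePts [Fintype F] (l : PGPoint F) : Multiset (PGPoint F) :=
  (Set.toFinite {P | PGIncident l P}).toFinset.val

/-- The characteristic function (with values in `𝔽_p`) of the line `l`. -/
def chi (p : ℕ) (l : PGPoint F) : PGPoint F → ZMod p :=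
  fun P => if PGIncident l P then 1 else 0

/-- The code `C(2,q)`: the `𝔽_p`-linear span of the characteristic functions of lines. -/
def code (p : ℕ) (F : Type) [Field F] : Submodule (ZMod p) (PGPoint F → ZMod p) :=
  Submodule.span (ZMod p) (Set.range (chi p))

open Polynomial Matrix Configuration

/-! ### Incidence in the plane -/

theorem inc_mk (w : Fin 3 → F) (hw : w ≠ 0) (P : PGPoint F) :
    PGIncident (Projectivization.mk F w hw) P ↔ w ⬝ᵥ P.rep = 0 := by
  obtain ⟨a, ha⟩ := Projectivization.exists_smul_eq_mk_rep F w hw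
  unfold PGIncident
  rw [← ha]
  change (a • w) ⬝ᵥ P.rep = 0 ↔ _
  rw [smul_dotProduct, smul_eq_zero_iff_eq]

theorem inc_iff_mem (l P : PGPoint F) : PGIncident l P ↔ P ∈ l := by
  rw [ofField.mem_iff, Projectivization.orthogonal_comm]
  conv_rhs => rw [← l.mk_rep, ← P.mk_rep, Projectivization.orthogonal_mk]
  rfl

theorem inc_unique {l m P Q : PGPoint F} (h1 : PGIncident l P) (h2 : PGIncident l Q)
    (h3 : PGIncident m P) (h4 : PGIncident m Q) : P = Q ∨ l = m := by
  rw [inc_iff_mem] at *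
  exact Nondegenerate.eq_or_eq h1 h2 h3 h4

theorem exists_inter {l m : PGPoint F} (h : l ≠ m) :
    ∃ P : PGPoint F, PGIncident l P ∧ PGIncident m P := by
  simp only [inc_iff_mem]
  exact ⟨_, HasPoints.mkPoint_ax h⟩

theorem order_eq [Fintype F] :
    ProjectivePlane.order (PGPoint F) (PGPoint F) = Fintype.card F := by
  have : Fintype (PGPoint F) := Fintype.ofFinite _
  have h1 := ProjectivePlane.card_points (PGPoint F) (PGPoint F)
  have h2 := Projectivization.card_of_finrank F (Fin 3 → F) (n := 3) (by simp)
  rw [Nat.card_eq_fintype_card, h1, Nat.card_eq_fintype_card] at h2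
  simp only [Finset.sum_range_succ, Finset.sum_range_zero] at h2
  rcases lt_trichotomy (ProjectivePlane.order (PGPoint F) (PGPoint F)) (Fintype.card F) with h | h | h
  · nlinarith
  · exact h
  · nlinarith

/-! ### Affine part and parallel classes -/

/-- The affine part of `M` with respect to the line at infinity `l`. -/
def affPart (M : Multiset (PGPoint F)) (l : PGPoint F) : Multiset (PGPoint F) :=
  M.filter (fun P => ¬ PGIncident l P)

/-- The linear form `w`, read as an affine function on the complement of the line `l`: the value
at `P` of `w / l`, which does not depend on the representative of `P`. Its level sets are the
affine lines of the parallel class cut out by `w`. -/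
def affForm (l : PGPoint F) (w : Fin 3 → F) (P : PGPoint F) : F :=
  (w ⬝ᵥ P.rep) / (l.rep ⬝ᵥ P.rep)

theorem ne_pencil {l : PGPoint F} {w : Fin 3 → F} (hw : ∀ x : F, w - x • l.rep ≠ 0) (x : F) :
    l ≠ Projectivization.mk F (w - x • l.rep) (hw x) := by
  intro h
  obtain ⟨a, ha⟩ := (Projectivization.mk_eq_mk_iff' F _ _ l.rep_nonzero (hw x)).1
    (l.mk_rep.trans h)
  have ha0 : a ≠ 0 := by
    rintro rfl
    exact l.rep_nonzero (by rw [← ha, zero_smul])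
  refine hw (x + a⁻¹) ?_
  have : w - x • l.rep = a⁻¹ • l.rep := by
    conv_rhs => rw [← ha]
    rw [smul_smul, inv_mul_cancel₀ ha0, one_smul]
  rw [add_smul, ← sub_sub, this, sub_self]

theorem pencil_inc {l : PGPoint F} {w : Fin 3 → F} (hw : ∀ x : F, w - x • l.rep ≠ 0) (x : F)
    {P : PGPoint F} (hP : ¬ PGIncident l P) :
    PGIncident (Projectivization.mk F (w - x • l.rep) (hw x)) P ↔ affForm l w P = x := by
  have hP' : l.rep ⬝ᵥ P.rep ≠ 0 := hP
  rw [inc_mk, sub_dotProduct, smul_dotProduct, affForm, div_eq_iff hP', sub_eq_zero, smul_eq_mul]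

theorem lineMeets_pencil (M : Multiset (PGPoint F)) {l : PGPoint F} {w : Fin 3 → F}
    (hw : ∀ x : F, w - x • l.rep ≠ 0) {E : PGPoint F} (hE : PGIncident l E)
    (hwE : w ⬝ᵥ E.rep = 0) (x : F) :
    lineMeets M (Projectivization.mk F (w - x • l.rep) (hw x)) =
      ((affPart M l).map (affForm l w)).count x + M.count E := by
  have hE' : l.rep ⬝ᵥ E.rep = 0 := hE
  rw [lineMeets, Multiset.countP_eq_countP_filter_add M _ (PGIncident l), add_comm]
  congr 1
  · rw [Multiset.count, Multiset.countP_map, Multiset.countP_eq_card_filter, affPart]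
    congr 1
    refine Multiset.filter_congr fun P hP => ?_
    rw [pencil_inc hw x (Multiset.mem_filter.1 hP).2, eq_comm]
  · rw [Multiset.countP_filter, Multiset.count]
    refine Multiset.countP_congr rfl fun P _ => ?_
    have hLE : PGIncident (Projectivization.mk F (w - x • l.rep) (hw x)) E := by
      rw [inc_mk, sub_dotProduct, smul_dotProduct, hwE, hE']; simp
    refine propext ⟨?_, ?_⟩
    · rintro ⟨h1, h2⟩
      exact (inc_unique hE h2 hLE h1).resolve_right (ne_pencil hw x)
    · rintro rfl
      exact ⟨hLE, hE⟩

/-- Counting the points of `M` on the lines through a point `Q` outside `M`. -/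
theorem sum_lines_through [Fintype (PGPoint F)] {M : Multiset (PGPoint F)} {Q : PGPoint F}
    (hQ : Q ∉ M) :
    ∑ L with PGIncident L Q, lineMeets M L = M.card := by
  induction M using Multiset.induction_on with
  | empty => simp [lineMeets]
  | cons P M ih =>
    rw [Multiset.mem_cons, not_or] at hQ
    have hone : ∑ L with PGIncident L Q, (if PGIncident L P then 1 else 0) = 1 := by
      rw [← Finset.card_filter, Finset.card_eq_one, Finset.filter_filter]
      obtain ⟨L, hL, huniq⟩ := HasLines.existsUnique_line (PGPoint F) (PGPoint F) Q P hQ.1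
      refine ⟨L, ?_⟩
      ext L'
      simp only [Finset.mem_filter, Finset.mem_univ, true_and, Finset.mem_singleton, inc_iff_mem]
      exact ⟨fun h => huniq L' h, fun h => h ▸ hL⟩
    simp only [lineMeets] at ih ⊢
    simp only [Multiset.countP_cons, Finset.sum_add_distrib, ih hQ.2, hone, Multiset.card_cons]

/-! ### Power sums -/

/-- The power sum `∑ (a + y b) ^ j` is a polynomial in `y` of degree at most `j` with leading
coefficient `∑ b ^ j`; if it has more than `j` zeros, then that coefficient is zero. -/
theorem sum_pow_eq_zero_of_many {α : Type*} (U : Multiset α) (a b : α → F) (j : ℕ) (G : Finset F)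
    (hG : j < G.card) (h : ∀ y ∈ G, (U.map fun P => (a P + y * b P) ^ j).sum = 0) :
    (U.map fun P => b P ^ j).sum = 0 := by
  let f : α → F[X] := fun P => C (b P) * X + C (a P)
  let H : F[X] := (U.map fun P => f P ^ j).sum
  have hdeg : H.natDegree ≤ j := by
    refine Multiset.sum_induction (fun g : F[X] => g.natDegree ≤ j) _
      (fun g g' hg hg' => (natDegree_add_le g g').trans (max_le hg hg')) (by simp) ?_
    intro g hg
    obtain ⟨P, -, rfl⟩ := Multiset.mem_map.1 hg
    refine natDegree_pow_le.trans ?_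
    have : (f P).natDegree ≤ 1 := natDegree_linear_le
    calc _ ≤ j * 1 := Nat.mul_le_mul_left _ this
      _ = j := mul_one j
  have hH : H = 0 := by
    refine eq_zero_of_natDegree_lt_card_of_eval_eq_zero' H G ?_ (hdeg.trans_lt hG)
    intro y hy
    rw [← h y hy]
    simp only [H, ← coe_evalRingHom, map_multiset_sum, Multiset.map_map]
    congr 1
    refine Multiset.map_congr rfl fun P _ => ?_
    simp [f]; ring
  have hc : H.coeff j = (U.map fun P => b P ^ j).sum := by
    simp only [H, ← lcoeff_apply, map_multiset_sum, Multiset.map_map]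
    congr 1
    refine Multiset.map_congr rfl fun P _ => ?_
    have := coeff_pow_of_natDegree_le (m := j) (n := 1) (p := f P) natDegree_linear_le
    rw [mul_one] at this
    simp only [Function.comp, lcoeff_apply]
    rw [this]; simp [f]
  rw [← hc, hH, coeff_zero]

section finite

variable [Fintype F]

/-- A direction outside the support of a Rédei type `n`-fold blocking set: all `q` affine lines of
that parallel class contain at least `n` of the `nq` affine points, hence exactly `n`. -/
theorem count_eq_of_not_mem {M : Multiset (PGPoint F)} {l : PGPoint F} {n : ℕ}
    (hblock : ∀ l : PGPoint F, n ≤ lineMeets M l)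
    (hredei : (affPart M l).card = n * Fintype.card F) {w : Fin 3 → F}
    (hw : ∀ x : F, w - x • l.rep ≠ 0) {E : PGPoint F} (hE : PGIncident l E)
    (hwE : w ⬝ᵥ E.rep = 0) (hEM : E ∉ M) (x : F) :
    ((affPart M l).map (affForm l w)).count x = n := by
  have hle : ∀ x ∈ (Finset.univ : Finset F), n ≤ ((affPart M l).map (affForm l w)).count x := by
    intro x _
    have := hblock (Projectivization.mk F (w - x • l.rep) (hw x))
    rwa [lineMeets_pencil M hw hE hwE, Multiset.count_eq_zero_of_notMem hEM, add_zero] at this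
  have hsum : ∑ _x : F, n = ∑ x : F, ((affPart M l).map (affForm l w)).count x := by
    rw [Multiset.sum_count_eq_card (fun _ _ => Finset.mem_univ _), Multiset.card_map, hredei]
    simp [mul_comm]
  exact ((Finset.sum_eq_sum_iff_of_le hle).1 hsum x (Finset.mem_univ x)).symm

/-- If every value of `F` has multiplicity `n` in `S`, the power sums of `S` of exponent less than
`q - 1` vanish. -/
theorem sum_pow_of_count {S : Multiset F} {n : ℕ} (hS : ∀ x, S.count x = n) {j : ℕ}
    (hj : j < Fintype.card F - 1) : (S.map (· ^ j)).sum = 0 := by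
  have : S = n • (Finset.univ : Finset F).val := by
    ext x
    rw [hS, Multiset.count_nsmul, Multiset.count_eq_one_of_mem Finset.univ.nodup (Finset.mem_univ x),
      mul_one]
  rw [this, Multiset.map_nsmul, Multiset.sum_nsmul]
  change n • ∑ x : F, x ^ j = 0
  rw [FiniteField.sum_pow_lt_card_sub_one F j hj, smul_zero]

/-- The multiplicity function of `S`, reduced modulo `p`, is interpolated by a polynomial `G`
whose coefficients are power sums of `S`. The vanishing of these makes `deg G < q / p`, and
`G ^ p = G` holds on `F` because the values lie in the prime field; as `deg (G ^ p) < q` this is an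
identity of polynomials, which forces `G` to be constant. -/
theorem count_const {p h : ℕ} [Fact p.Prime] (hh : 1 ≤ h) [CharP F p]
    (hcard : Fintype.card F = p ^ h) (S : Multiset F)
    (hS : ∀ j < p ^ h - p ^ (h - 1), (S.map (· ^ j)).sum = 0) (x y : F) :
    (S.count x : ZMod p) = S.count y := by
  have hp : p.Prime := Fact.out
  have hq : p ^ h = p * p ^ (h - 1) := by
    rw [← pow_succ', Nat.sub_add_cancel hh]
  set r := p ^ (h - 1) with hr
  have hr1 : 1 ≤ r := Nat.one_le_pow _ _ hp.pos
  have hrq : r < p ^ h := by rw [hq]; nlinarith [hp.two_le]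
  have hq1 : 1 < p ^ h := by omega
  let K : F[X] := (S.map fun s => (X + C (-s)) ^ (p ^ h - 1)).sum
  let G : F[X] := C (S.card : F) - K
  have heval : ∀ x, G.eval x = (S.count x : F) := by
    intro x
    have hK : K.eval x = (S.map fun s => (x - s) ^ (p ^ h - 1)).sum := by
      simp only [K, ← coe_evalRingHom, map_multiset_sum, Multiset.map_map]
      congr 1
      refine Multiset.map_congr rfl fun P _ => ?_
      simp [sub_eq_add_neg]
    simp only [G, eval_sub, eval_C, hK]
    clear hK G K hS
    induction S using Multiset.induction_on with
    | empty => simp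
    | cons s S ih =>
      rw [Multiset.card_cons, Multiset.map_cons, Multiset.sum_cons, Multiset.count_cons]
      push_cast
      rw [← ih]
      by_cases hxs : x = s
      · subst hxs
        rw [sub_self, zero_pow (by omega), if_pos rfl]; ring
      · rw [← hcard, FiniteField.pow_card_sub_one_eq_one _ (sub_ne_zero.2 hxs), if_neg hxs]; ring
  have hKcoeff : ∀ i, r ≤ i → K.coeff i = 0 := by
    intro i hi
    simp only [K, ← lcoeff_apply, map_multiset_sum, Multiset.map_map]
    simp only [Function.comp_def, lcoeff_apply, coeff_X_add_C_pow]
    have : (S.map fun s => (-s) ^ (p ^ h - 1 - i) *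
        ((p ^ h - 1).choose i : F)).sum = (-1) ^ (p ^ h - 1 - i) *
        (S.map (· ^ (p ^ h - 1 - i))).sum * ((p ^ h - 1).choose i : F) := by
      rw [← Multiset.sum_map_mul_left, ← Multiset.sum_map_mul_right]
      congr 1
      refine Multiset.map_congr rfl fun s _ => ?_
      rw [neg_pow]
    rw [this, hS _ (by omega)]; simp
  have hGdeg : G.natDegree ≤ r - 1 := by
    refine natDegree_le_iff_coeff_eq_zero.2 fun i hi => ?_
    simp only [G, coeff_sub]
    rw [hKcoeff i (by omega), coeff_C_of_ne_zero (by omega), sub_zero]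
  have hGp : G ^ p = G := by
    rw [← sub_eq_zero]
    refine eq_zero_of_natDegree_lt_card_of_eval_eq_zero' _ (Finset.univ : Finset F) ?_ ?_
    · intro x _
      rw [eval_sub, eval_pow, heval]
      have := ZMod.pow_card (S.count x : ZMod p)
      have h2 := congrArg (ZMod.castHom dvd_rfl F) this
      simp only [map_pow, map_natCast] at h2
      rw [h2, sub_self]
    · rw [Finset.card_univ, hcard]
      refine (natDegree_sub_le _ _).trans_lt (max_lt ?_ ?_)
      · rw [natDegree_pow, hq]
        exact Nat.mul_lt_mul_of_pos_left (by omega) hp.pos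
      · rw [hq]; nlinarith [hp.two_le, Nat.sub_lt hr1 one_pos]
  have hG0 : G.natDegree = 0 := by
    have := congrArg natDegree hGp
    rw [natDegree_pow] at this
    nlinarith [hp.two_le]
  have hxy : (S.count x : F) = (S.count y : F) := by
    rw [← heval, ← heval, eq_C_of_natDegree_eq_zero hG0]; simp
  refine (ZMod.castHom dvd_rfl F : ZMod p →+* F).injective ?_
  simpa using hxy

/-! ### Counting points and lines -/

theorem card_lines_through [Fintype (PGPoint F)] (Q : PGPoint F) :
    (Finset.univ.filter fun L : PGPoint F => PGIncident L Q).card = Fintype.card F + 1 := by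
  have h := ProjectivePlane.lineCount_eq (PGPoint F) Q
  rw [order_eq, lineCount, Nat.card_eq_fintype_card, Fintype.card_subtype] at h
  rw [← h]
  congr 1
  ext L
  simp [inc_iff_mem]

theorem card_points_on [Fintype (PGPoint F)] (l : PGPoint F) :
    (Finset.univ.filter fun P : PGPoint F => PGIncident l P).card = Fintype.card F + 1 := by
  have h := ProjectivePlane.pointCount_eq (PGPoint F) l
  rw [order_eq, pointCount, Nat.card_eq_fintype_card, Fintype.card_subtype] at h
  rw [← h]
  congr 1
  ext L
  simp [inc_iff_mem]

/-- There are `q ^ 2` affine points, more than the `nq` elements of the affine part of `M`. -/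
theorem exists_affine_not_mem {M : Multiset (PGPoint F)} {l : PGPoint F} {n : ℕ}
    (hn : n < Fintype.card F) (hredei : (affPart M l).card = n * Fintype.card F) :
    ∃ Q : PGPoint F, ¬ PGIncident l Q ∧ Q ∉ M := by
  have : Fintype (PGPoint F) := Fintype.ofFinite _
  by_contra! hcon
  have h1 := ProjectivePlane.card_points (PGPoint F) (PGPoint F)
  rw [order_eq] at h1
  have h2 := Finset.card_filter_add_card_filter_not (s := (Finset.univ : Finset (PGPoint F)))
    (fun P => PGIncident l P)
  rw [card_points_on, Finset.card_univ, h1] at h2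
  have h3 : (Finset.univ.filter fun P : PGPoint F => ¬ PGIncident l P).card ≤
      (affPart M l).toFinset.card := by
    refine Finset.card_le_card fun P hP => ?_
    have hP' := (Finset.mem_filter.1 hP).2
    rw [Multiset.mem_toFinset, affPart, Multiset.mem_filter]
    exact ⟨hcon P hP', hP'⟩
  have h4 := Multiset.toFinset_card_le (affPart M l)
  rw [hredei] at h4
  nlinarith

/-! ### The parallel class of a point at infinity -/

/-- The affine lines through a point `E` of `l` in the support of `M` all contain the same number
of affine points of `M` modulo `p`. With linear forms `v₀` vanishing at `E` and `v` not vanishing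
there, the forms `v + y v₀` cut out the directions other than `E`; those outside the support
provide at least `q - q / p` zeros of `∑ (v + y v₀) ^ j`, so `∑ v₀ ^ j = 0` for `j < q - q / p`. -/
theorem count_const_of_few {p h n : ℕ} [Fact p.Prime] (hh : 1 ≤ h) [CharP F p]
    (hcard : Fintype.card F = p ^ h) {M : Multiset (PGPoint F)}
    (hblock : ∀ l : PGPoint F, n ≤ lineMeets M l) {l : PGPoint F}
    (hredei : (affPart M l).card = n * Fintype.card F)
    (hfew : (M.toFinset.filter (fun P => PGIncident l P)).card ≤ p ^ (h - 1) + 1)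
    {m E : PGPoint F} (hml : l ≠ m) (hlE : PGIncident l E) (hmE : PGIncident m E) (hEM : E ∈ M)
    (x y : F) :
    (((affPart M l).map (affForm l m.rep)).count x : ZMod p) =
      ((affPart M l).map (affForm l m.rep)).count y := by
  have hp : p.Prime := Fact.out
  have hr1 : 1 ≤ p ^ (h - 1) := Nat.one_le_pow _ _ hp.pos
  have hlE' : l.rep ⬝ᵥ E.rep = 0 := hlE
  have hmE' : m.rep ⬝ᵥ E.rep = 0 := hmE
  obtain ⟨v, hv⟩ : ∃ v : Fin 3 → F, v ⬝ᵥ E.rep ≠ 0 := by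
    by_contra! hcon
    exact E.rep_nonzero (dotProduct_eq_zero_iff.1 fun w => by rw [dotProduct_comm]; exact hcon w)
  have hwE : ∀ y : F, (v + y • m.rep) ⬝ᵥ E.rep ≠ 0 := by
    intro y
    rwa [add_dotProduct, smul_dotProduct, hmE', smul_zero, add_zero]
  have hw : ∀ y x : F, (v + y • m.rep) - x • l.rep ≠ 0 := by
    intro y x h0
    apply hwE y
    rw [sub_eq_zero.1 h0, smul_dotProduct, hlE', smul_zero]
  have hD : ∀ y : F, ∃ D : PGPoint F, PGIncident l D ∧ (v + y • m.rep) ⬝ᵥ D.rep = 0 := by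
    intro y
    obtain ⟨D, h1, h2⟩ := exists_inter (ne_pencil (hw y) 0)
    rw [inc_mk, zero_smul, sub_zero] at h2
    exact ⟨D, h1, h2⟩
  choose D hDl hDw using hD
  have hDE : ∀ y, D y ≠ E := by
    intro y h0
    exact hwE y (h0 ▸ hDw y)
  have hDinj : Function.Injective D := by
    intro y y' hyy
    by_contra hne
    have e1 := hDw y
    have e2 := hDw y'
    rw [← hyy] at e2
    rw [add_dotProduct, smul_dotProduct, smul_eq_mul] at e1 e2
    have e3 : (y - y') * (m.rep ⬝ᵥ (D y).rep) = 0 := by linear_combination e1 - e2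
    have e4 : PGIncident m (D y) :=
      (mul_eq_zero.1 e3).resolve_left (sub_ne_zero.2 hne)
    exact hDE y ((inc_unique (hDl y) hlE e4 hmE).resolve_right hml)
  have hbad : (Finset.univ.filter fun y => D y ∈ M).card ≤ p ^ (h - 1) := by
    have h1 : (Finset.univ.filter fun y => D y ∈ M).card ≤
        ((M.toFinset.filter (fun P => PGIncident l P)).erase E).card := by
      refine Finset.card_le_card_of_injOn D ?_ hDinj.injOn
      intro y hy
      have hy' := (Finset.mem_filter.1 hy).2
      simp [hDE y, hDl y, hy']
    rw [Finset.card_erase_of_mem (by simp [hEM, hlE])] at h1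
    omega
  have hgood := Finset.card_filter_add_card_filter_not (s := (Finset.univ : Finset F))
    (fun y => D y ∈ M)
  rw [Finset.card_univ, hcard] at hgood
  refine count_const hh hcard _ ?_ x y
  intro j hj
  rw [Multiset.map_map]
  refine sum_pow_eq_zero_of_many (affPart M l) (affForm l v) (affForm l m.rep) j
    (Finset.univ.filter fun y => D y ∉ M) (by omega) ?_
  intro y hy
  have hy' := (Finset.mem_filter.1 hy).2
  have := sum_pow_of_count
    (count_eq_of_not_mem hblock hredei (hw y) (hDl y) (hDw y) hy') (j := j) (by omega)
  rw [Multiset.map_map] at this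
  rw [← this]
  congr 1
  refine Multiset.map_congr rfl fun P _ => ?_
  simp only [Function.comp, affForm, add_dotProduct, smul_dotProduct, smul_eq_mul]
  ring

end finite

theorem sub_smul_rep_ne_zero {l m : PGPoint F} (h : l ≠ m) (x : F) : m.rep - x • l.rep ≠ 0 := by
  intro h0
  apply h
  rw [← l.mk_rep, ← m.mk_rep, eq_comm, Projectivization.mk_eq_mk_iff']
  exact ⟨x, (sub_eq_zero.1 h0).symm⟩

/-- Every line other than `l` through the point `l ∩ m` belongs to the pencil of `m - x l`. -/
theorem exists_eq_pencil [Fintype F] {l m L E : PGPoint F} (hm : l ≠ m) (hL : l ≠ L)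
    (hlE : PGIncident l E) (hmE : PGIncident m E) (hLE : PGIncident L E) :
    ∃ x : F, L = Projectivization.mk F (m.rep - x • l.rep) (sub_smul_rep_ne_zero hm x) := by
  have : Fintype (PGPoint F) := Fintype.ofFinite _
  obtain ⟨P, hP, hPE⟩ := Finset.exists_mem_ne
    (s := Finset.univ.filter fun P : PGPoint F => PGIncident L P)
    (by rw [card_points_on]; have := Fintype.card_pos (α := F); omega) E
  have hLP := (Finset.mem_filter.1 hP).2
  have hlP : ¬ PGIncident l P := fun h0 =>
    (inc_unique h0 hlE hLP hLE).elim hPE hL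
  refine ⟨affForm l m.rep P, ?_⟩
  have h1 := (pencil_inc (sub_smul_rep_ne_zero hm) (affForm l m.rep P) hlP).2 rfl
  have h2 : PGIncident (Projectivization.mk F (m.rep - affForm l m.rep P • l.rep)
      (sub_smul_rep_ne_zero hm _)) E := by
    have e1 : l.rep ⬝ᵥ E.rep = 0 := hlE
    have e2 : m.rep ⬝ᵥ E.rep = 0 := hmE
    rw [inc_mk, sub_dotProduct, smul_dotProduct, e1, e2]; simp
  exact (inc_unique hLP hLE h1 h2).resolve_left hPE

theorem stmt8 (p h n : ℕ) [Fact p.Prime] (hh : 1 ≤ h)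
    (F : Type) [Field F] [Fintype F] [CharP F p] (hcard : Fintype.card F = p ^ h)
    (M : Multiset (PGPoint F)) (hn : n < Fintype.card F)
    (hblock : ∀ l : PGPoint F, n ≤ lineMeets M l)
    (hmin : ∀ P ∈ M, ∃ l : PGPoint F, PGIncident l P ∧ lineMeets M l = n)
    (l : PGPoint F)
    (hredei : Multiset.countP (fun P => ¬ PGIncident l P) M = n * Fintype.card F)
    (hfew : (M.toFinset.filter (fun P => PGIncident l P)).card ≤ p ^ (h - 1) + 1) :
    ∀ l' : PGPoint F, (lineMeets M l' : ZMod p) = (n : ZMod p) := by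
  have : Fintype (PGPoint F) := Fintype.ofFinite _
  have hU : (affPart M l).card = n * Fintype.card F := by
    rw [← hredei, affPart, Multiset.countP_eq_card_filter]
  obtain ⟨Q, hQl, hQM⟩ := exists_affine_not_mem hn hU
  have hcardM : M.card = lineMeets M l + n * Fintype.card F := by
    rw [← hredei, lineMeets, ← Multiset.card_eq_countP_add_countP]
  have hsumQ := sum_lines_through hQM
  -- The essential line through a point of `l` can be chosen different from `l`: if `l` itself meets
  -- `M` in `n` points, then `|M| = n (q + 1)`, so all lines through `Q` meet `M` in `n` points.
  have hess : ∀ E ∈ M, PGIncident l E →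
      ∃ L : PGPoint F, l ≠ L ∧ PGIncident L E ∧ lineMeets M L = n := by
    intro E hE hlE
    obtain ⟨L, hLE, hL⟩ := hmin E hE
    by_cases hLl : l = L
    · subst hLl
      have hne : Q ≠ E := fun h0 => hQM (h0 ▸ hE)
      obtain ⟨L', ⟨hQ', hE'⟩, -⟩ :=
        HasLines.existsUnique_line (PGPoint F) (PGPoint F) Q E hne
      rw [← inc_iff_mem] at hQ' hE'
      have hall : ∑ L ∈ Finset.univ.filter (fun L : PGPoint F => PGIncident L Q), n =
          ∑ L ∈ Finset.univ.filter (fun L : PGPoint F => PGIncident L Q), lineMeets M L := by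
        rw [hsumQ, hcardM, hL, Finset.sum_const, card_lines_through, smul_eq_mul]; ring
      refine ⟨L', fun h0 => hQl (h0 ▸ hQ'), hE', ?_⟩
      exact ((Finset.sum_eq_sum_iff_of_le fun L _ => hblock L).1 hall L' (by simp [hQ'])).symm
    · exact ⟨L, hLl, hLE, hL⟩
  have hother : ∀ l' : PGPoint F, l ≠ l' → (lineMeets M l' : ZMod p) = (n : ZMod p) := by
    intro m hm
    obtain ⟨E, hlE, hmE⟩ := exists_inter hm
    have hpen := lineMeets_pencil M (sub_smul_rep_ne_zero hm) hlE hmE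
    obtain ⟨x, hx⟩ := exists_eq_pencil hm hm hlE hmE hmE
    rw [hx, hpen]
    by_cases hEM : E ∈ M
    · obtain ⟨L, hlL, hLE, hL⟩ := hess E hEM hlE
      obtain ⟨y, hy⟩ := exists_eq_pencil hm hlL hlE hmE hLE
      rw [← hL, hy, hpen]
      push_cast
      rw [count_const_of_few hh hcard hblock hU hfew hm hlE hmE hEM x y]
    · rw [count_eq_of_not_mem hblock hU _ hlE hmE hEM, Multiset.count_eq_zero_of_notMem hEM,
        add_zero]
      exact sub_smul_rep_ne_zero hm
  intro l'
  by_cases hl : l = l'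
  · subst hl
    have hq0 : (Fintype.card F : ZMod p) = 0 := by
      rw [hcard, Nat.cast_pow, CharP.cast_eq_zero, zero_pow (by omega)]
    have h1 := congrArg (Nat.cast : ℕ → ZMod p) (hsumQ.trans hcardM)
    push_cast at h1
    rw [Finset.sum_congr rfl fun L hL => hother L (by
      rintro rfl
      exact hQl (Finset.mem_filter.1 hL).2), Finset.sum_const, card_lines_through, nsmul_eq_mul]
      at h1
    push_cast at h1
    rw [hq0] at h1
    linear_combination -h1
  · exact hother l' hl

end
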